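/- Let n ≥ 1, let q₁ > q₂ > 0, let u₁, u₂ > 0 and set t = 2(u₁q₁ − u₂q₂); assume t > 0. Then for every bounded Lipschitz function f : ℝ^n → ℝ and every x ∈ ℝ^n, ( P_{u₁}( e^{q₁ Q_t f} )(x) )^{1/q₁} ≤ ( P_{u₂}( e^{q₂ f} )(x) )^{1/q₂} · [ (u₁^{1/q₂}/u₂^{1/q₁}) · ( (q₁−q₂)/(u₁q₁−u₂q₂) )^{1/q₂−1/q₁} ]^{n/2} (dimensional local hypercontractivity of the Hamilton–Jacobi semigroup for the heat semigroup on ℝ^n, which satisfies CD(0,n)). -/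

import Mathlib

open MeasureTheory Real

/-- Euclidean heat semigroup, with `heat n 0 f = f`. -/
noncomputable def heat (n : ℕ) (t : ℝ) (f : EuclideanSpace ℝ (Fin n) → ℝ)
    (x : EuclideanSpace ℝ (Fin n)) : ℝ :=
  if t = 0 then f x
  else (4 * π * t) ^ (-(n : ℝ) / 2) * ∫ y, f y * Real.exp (-‖x - y‖ ^ 2 / (4 * t))

/-- Hopf-Lax (Hamilton-Jacobi) semigroup on `ℝ^n`. -/
noncomputable def hopfLax (n : ℕ) (t : ℝ) (f : EuclideanSpace ℝ (Fin n) → ℝ)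
    (x : EuclideanSpace ℝ (Fin n)) : ℝ :=
  ⨅ y : EuclideanSpace ℝ (Fin n), (f y + ‖x - y‖ ^ 2 / (2 * t))

open scoped ENNReal Pointwise

/-- Inner regularity of Lebesgue measure, in the form of an approximation principle for bounds. -/
theorem volume_add_le_of_forall_isCompact {A : Set ℝ} (hA : MeasurableSet A) {b c : ℝ≥0∞}
    (h : ∀ K ⊆ A, IsCompact K → volume K + b ≤ c) : volume A + b ≤ c := by
  have hbc : b ≤ c := by simpa using h ∅ (Set.empty_subset A) isCompact_empty
  rcases eq_or_ne b ⊤ with rfl | hb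
  · simpa using hbc
  refine add_le_of_le_tsub_right_of_le hbc ?_
  rw [hA.measure_eq_iSup_isCompact]
  exact iSup_le fun K => iSup_le fun hKA => iSup_le fun hK =>
    ENNReal.le_sub_of_add_le_right hb (h K hKA hK)

theorem volume_add_volume_le_of_isCompact {A B C : Set ℝ} (hA : IsCompact A) (hB : IsCompact B)
    (hA' : A.Nonempty) (hB' : B.Nonempty) (h : ∀ a ∈ A, ∀ b ∈ B, a + b ∈ C) :
    volume A + volume B ≤ volume C := by
  obtain ⟨a, ha⟩ := hA.exists_isGreatest hA'
  obtain ⟨b, hb⟩ := hB.exists_isLeast hB'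
  have hdisj : AEDisjoint volume (b +ᵥ A) (a +ᵥ B) := by
    refine measure_mono_null ?_ (Real.volume_singleton (a := a + b))
    rintro _ ⟨⟨x, hx, rfl⟩, y, hy, hxy⟩
    have h1 := ha.2 hx
    have h2 := hb.2 hy
    simp only [vadd_eq_add] at hxy
    simp only [vadd_eq_add, Set.mem_singleton_iff]
    linarith
  calc volume A + volume B = volume (b +ᵥ A) + volume (a +ᵥ B) := by
        rw [measure_vadd, measure_vadd]
    _ = volume ((b +ᵥ A) ∪ (a +ᵥ B)) :=
        (measure_union₀ (hB.measurableSet.const_vadd a).nullMeasurableSet hdisj).symm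
    _ ≤ volume C := by
        refine measure_mono (Set.union_subset ?_ ?_)
        · rintro _ ⟨x, hx, rfl⟩
          simpa [add_comm] using h x hx b hb.1
        · rintro _ ⟨x, hx, rfl⟩
          exact h a ha.1 x hx

/-- **Brunn-Minkowski inequality** on the real line. -/
theorem volume_add_volume_le {A B C : Set ℝ} (hA : MeasurableSet A) (hB : MeasurableSet B)
    (hA' : A.Nonempty) (hB' : B.Nonempty) (h : ∀ a ∈ A, ∀ b ∈ B, a + b ∈ C) :
    volume A + volume B ≤ volume C := by
  obtain ⟨a, ha⟩ := hA'
  obtain ⟨b, hb⟩ := hB'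
  refine volume_add_le_of_forall_isCompact hA fun K hKA hK => ?_
  rw [add_comm]
  refine volume_add_le_of_forall_isCompact hB fun L hLB hL => ?_
  rw [add_comm]
  refine le_trans ?_ (volume_add_volume_le_of_isCompact (hK.insert a) (hL.insert b)
    (Set.insert_nonempty a K) (Set.insert_nonempty b L) fun x hx y hy =>
      h x (Set.insert_subset ha hKA hx) y (Set.insert_subset hb hLB hy))
  gcongr <;> exact Set.subset_insert _ _

/-- Brunn-Minkowski inequality on the real line for convex combinations. -/
theorem ofReal_mul_volume_add_ofReal_mul_volume_le {r s : ℝ} (hr : 0 < r) (hs : 0 < s)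
    {A B C : Set ℝ} (hA : MeasurableSet A) (hB : MeasurableSet B)
    (hA' : A.Nonempty) (hB' : B.Nonempty) (h : ∀ a ∈ A, ∀ b ∈ B, r * a + s * b ∈ C) :
    ENNReal.ofReal r * volume A + ENNReal.ofReal s * volume B ≤ volume C := by
  have key := volume_add_volume_le (hA.const_smul₀ r) (hB.const_smul₀ s)
    (hA'.smul_set (a := r)) (hB'.smul_set (a := s)) (C := C) (by
      rintro _ ⟨a, ha, rfl⟩ _ ⟨b, hb, rfl⟩
      exact h a ha b hb)
  simpa [Measure.addHaar_smul, abs_of_pos hr, abs_of_pos hs] using key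

/-- Weighted AM-GM inequality for two extended nonnegative reals. -/
theorem ENNReal.geom_mean_le_arith_mean2_weighted {r s : ℝ} (hr : 0 < r) (hs : 0 < s)
    (hrs : r + s = 1) (a b : ℝ≥0∞) :
    a ^ r * b ^ s ≤ ENNReal.ofReal r * a + ENNReal.ofReal s * b := by
  have hpq : (r⁻¹).HolderConjugate s⁻¹ := by
    rw [Real.holderConjugate_iff]
    refine ⟨(one_lt_inv₀ hr).2 (by linarith), by simpa using hrs⟩
  have := ENNReal.young_inequality (a ^ r) (b ^ s) hpq
  rwa [← ENNReal.rpow_mul, ← ENNReal.rpow_mul, mul_inv_cancel₀ hr.ne', mul_inv_cancel₀ hs.ne',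
    ENNReal.rpow_one, ENNReal.rpow_one, ENNReal.ofReal_inv_of_pos hr,
    ENNReal.ofReal_inv_of_pos hs, div_eq_mul_inv, div_eq_mul_inv, inv_inv, inv_inv,
    mul_comm a, mul_comm b] at this

theorem lintegral_eq_setLIntegral_volume_lt {f : ℝ → ℝ≥0∞} (hf : Measurable f)
    (hf1 : ∀ x, f x ≤ 1) :
    ∫⁻ x, f x = ∫⁻ t in Set.Ioo (0 : ℝ) 1, volume {x | ENNReal.ofReal t < f x} := by
  have hfin : ∀ x, f x ≠ ⊤ := fun x => ne_top_of_le_ne_top ENNReal.one_ne_top (hf1 x)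
  have h1 := lintegral_eq_lintegral_meas_lt volume (f := fun x => (f x).toReal)
    (.of_forall fun x => ENNReal.toReal_nonneg) hf.ennreal_toReal.aemeasurable
  simp only [ENNReal.ofReal_toReal (hfin _)] at h1
  have h2 : ∀ t ∈ Set.Ioi (0 : ℝ), {x | t < (f x).toReal} = {x | ENNReal.ofReal t < f x} := by
    intro t ht
    ext x
    exact (ENNReal.ofReal_lt_iff_lt_toReal (Set.mem_Ioi.1 ht).le (hfin x)).symm
  rw [h1, setLIntegral_congr_fun measurableSet_Ioi fun t ht => congrArg volume (h2 t ht)]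
  rw [← lintegral_indicator measurableSet_Ioi, ← lintegral_indicator measurableSet_Ioo]
  refine lintegral_congr fun t => ?_
  rcases lt_or_ge t 1 with ht | ht
  · simp [Set.indicator_apply, ht]
  · have hempty : {x | ENNReal.ofReal t < f x} = ∅ := by
      ext x
      simpa using (hf1 x).trans (ENNReal.one_le_ofReal.2 ht)
    simp [Set.indicator_apply, hempty]

/-- Prékopa-Leindler on the line, for functions with supremum one. -/
theorem prekopaLeindler_real_of_iSup_eq_one {r s : ℝ} (hr : 0 < r) (hs : 0 < s) (hrs : r + s = 1)
    {f g h : ℝ → ℝ≥0∞} (hf : Measurable f) (hg : Measurable g) (hh : Measurable h)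
    (hf1 : ⨆ x, f x = 1) (hg1 : ⨆ x, g x = 1)
    (hfgh : ∀ x y, f x ^ r * g y ^ s ≤ h (r * x + s * y)) :
    (∫⁻ x, f x) ^ r * (∫⁻ x, g x) ^ s ≤ ∫⁻ x, h x := by
  have hfle : ∀ x, f x ≤ 1 := fun x => hf1 ▸ le_iSup f x
  have hgle : ∀ x, g x ≤ 1 := fun x => hg1 ▸ le_iSup g x
  refine (ENNReal.geom_mean_le_arith_mean2_weighted hr hs hrs _ _).trans ?_
  refine le_trans ?_ (lintegral_mono fun x => min_le_left (h x) 1)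
  rw [lintegral_eq_setLIntegral_volume_lt hf hfle, lintegral_eq_setLIntegral_volume_lt hg hgle,
    lintegral_eq_setLIntegral_volume_lt (hh.min measurable_const) fun x => min_le_right _ _,
    ← lintegral_const_mul' _ _ ENNReal.ofReal_ne_top,
    ← lintegral_const_mul' _ _ ENNReal.ofReal_ne_top]
  refine (le_lintegral_add _ _).trans (setLIntegral_mono' measurableSet_Ioo fun t ht => ?_)
  have ht1 : ENNReal.ofReal t < 1 := by simpa using ht.2
  refine ofReal_mul_volume_add_ofReal_mul_volume_le hr hs (measurableSet_lt measurable_const hf)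
    (measurableSet_lt measurable_const hg) ?_ ?_ fun a ha b hb => ?_
  · exact lt_iSup_iff.1 (hf1 ▸ ht1)
  · exact lt_iSup_iff.1 (hg1 ▸ ht1)
  refine lt_min (lt_of_lt_of_le ?_ (hfgh a b)) ht1
  calc ENNReal.ofReal t = ENNReal.ofReal t ^ r * ENNReal.ofReal t ^ s := by
        rw [← ENNReal.rpow_add_of_nonneg _ _ hr.le hs.le, hrs, ENNReal.rpow_one]
    _ < f a ^ r * g b ^ s :=
        ENNReal.mul_lt_mul (ENNReal.rpow_lt_rpow ha hr) (ENNReal.rpow_lt_rpow hb hs)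

theorem prekopaLeindler_real_of_bounded {r s : ℝ} (hr : 0 < r) (hs : 0 < s) (hrs : r + s = 1)
    {f g h : ℝ → ℝ≥0∞} (hf : Measurable f) (hg : Measurable g) (hh : Measurable h)
    (hf1 : ⨆ x, f x ≠ ⊤) (hg1 : ⨆ x, g x ≠ ⊤)
    (hfgh : ∀ x y, f x ^ r * g y ^ s ≤ h (r * x + s * y)) :
    (∫⁻ x, f x) ^ r * (∫⁻ x, g x) ^ s ≤ ∫⁻ x, h x := by
  set M := ⨆ x, f x with hM
  set N := ⨆ x, g x with hN
  rcases eq_or_ne M 0 with hM0 | hM0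
  · have : ∀ x, f x = 0 := fun x => le_antisymm (hM0 ▸ le_iSup f x) zero_le
    simp [this, hr]
  rcases eq_or_ne N 0 with hN0 | hN0
  · have : ∀ x, g x = 0 := fun x => le_antisymm (hN0 ▸ le_iSup g x) zero_le
    simp [this, hs]
  have key := prekopaLeindler_real_of_iSup_eq_one hr hs hrs (hf.const_mul M⁻¹) (hg.const_mul N⁻¹)
    (hh.const_mul (M⁻¹ ^ r * N⁻¹ ^ s))
    (by rw [← ENNReal.mul_iSup, ← hM, ENNReal.inv_mul_cancel hM0 hf1])
    (by rw [← ENNReal.mul_iSup, ← hN, ENNReal.inv_mul_cancel hN0 hg1])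
    (fun x y => by
      rw [ENNReal.mul_rpow_of_nonneg _ _ hr.le, ENNReal.mul_rpow_of_nonneg _ _ hs.le,
        mul_mul_mul_comm]
      gcongr
      exact hfgh x y)
  have hMr : M⁻¹ ^ r ≠ 0 ∧ M⁻¹ ^ r ≠ ⊤ := by
    simp [ENNReal.rpow_eq_zero_iff, ENNReal.rpow_eq_top_iff, hr, hr.not_gt, hM0, hf1]
  have hNs : N⁻¹ ^ s ≠ 0 ∧ N⁻¹ ^ s ≠ ⊤ := by
    simp [ENNReal.rpow_eq_zero_iff, ENNReal.rpow_eq_top_iff, hs, hs.not_gt, hN0, hg1]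
  rw [lintegral_const_mul _ hf, lintegral_const_mul _ hg, lintegral_const_mul _ hh,
    ENNReal.mul_rpow_of_nonneg _ _ hr.le, ENNReal.mul_rpow_of_nonneg _ _ hs.le,
    mul_mul_mul_comm] at key
  exact (ENNReal.mul_le_mul_iff_right (mul_ne_zero hMr.1 hNs.1)
    (ENNReal.mul_ne_top hMr.2 hNs.2)).1 key

theorem tendsto_lintegral_min_natCast {α : Type*} [MeasurableSpace α] (μ : Measure α)
    {f : α → ℝ≥0∞} (hf : Measurable f) :
    Filter.Tendsto (fun N : ℕ => ∫⁻ x, min (f x) N ∂μ) Filter.atTop (nhds (∫⁻ x, f x ∂μ)) := by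
  refine lintegral_tendsto_of_tendsto_of_monotone
    (fun N => (hf.min measurable_const).aemeasurable) (.of_forall fun x => ?_)
    (.of_forall fun x => ?_)
  · intro m n hmn
    dsimp only
    gcongr
  · simpa using (tendsto_const_nhds (x := f x)).min ENNReal.tendsto_nat_nhds_top

/-- **Prékopa-Leindler inequality** on the real line. -/
theorem prekopaLeindler_real {r s : ℝ} (hr : 0 < r) (hs : 0 < s) (hrs : r + s = 1)
    {f g h : ℝ → ℝ≥0∞} (hf : Measurable f) (hg : Measurable g) (hh : Measurable h)
    (hfgh : ∀ x y, f x ^ r * g y ^ s ≤ h (r * x + s * y)) :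
    (∫⁻ x, f x) ^ r * (∫⁻ x, g x) ^ s ≤ ∫⁻ x, h x := by
  rcases eq_or_ne (∫⁻ x, f x) 0 with hf0 | hf0
  · simp [hf0, hr]
  rcases eq_or_ne (∫⁻ x, g x) 0 with hg0 | hg0
  · simp [hg0, hs]
  refine le_of_tendsto' (ENNReal.Tendsto.mul
    ((ENNReal.continuous_rpow_const.tendsto _).comp (tendsto_lintegral_min_natCast volume hf)) ?_
    ((ENNReal.continuous_rpow_const.tendsto _).comp (tendsto_lintegral_min_natCast volume hg)) ?_)
    fun N => ?_
  · left
    simp [ENNReal.rpow_eq_zero_iff, hf0, hr.not_gt]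
  · left
    simp [ENNReal.rpow_eq_zero_iff, hg0, hs.not_gt]
  · refine prekopaLeindler_real_of_bounded hr hs hrs (hf.min measurable_const)
      (hg.min measurable_const) hh
      (ne_top_of_le_ne_top (ENNReal.natCast_ne_top N) (iSup_le fun x => min_le_right _ _))
      (ne_top_of_le_ne_top (ENNReal.natCast_ne_top N) (iSup_le fun x => min_le_right _ _))
      fun x y => le_trans ?_ (hfgh x y)
    gcongr <;> exact min_le_left _ _

/-- Prékopa-Leindler inequality on `Fin n → ℝ`. -/
theorem prekopaLeindler_pi {r s : ℝ} (hr : 0 < r) (hs : 0 < s) (hrs : r + s = 1) (n : ℕ)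
    {f g h : (Fin n → ℝ) → ℝ≥0∞} (hf : Measurable f) (hg : Measurable g) (hh : Measurable h)
    (hfgh : ∀ x y, f x ^ r * g y ^ s ≤ h (r • x + s • y)) :
    (∫⁻ x, f x) ^ r * (∫⁻ x, g x) ^ s ≤ ∫⁻ x, h x := by
  induction n with
  | zero =>
    rw [volume_pi, Measure.pi_of_empty _ 0]
    simpa [Subsingleton.elim (r • (0 : Fin 0 → ℝ) + s • 0) 0] using hfgh 0 0
  | succ n ih =>
    have hmp := (volume_preserving_piFinSuccAbove (fun _ : Fin (n + 1) => ℝ) 0).symm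
    have hmeas : ∀ {k : (Fin (n + 1) → ℝ) → ℝ≥0∞}, Measurable k →
        Measurable fun p : ℝ × (Fin n → ℝ) =>
          k ((MeasurableEquiv.piFinSuccAbove (fun _ => ℝ) 0).symm p) :=
      fun hk => hk.comp (MeasurableEquiv.measurable _)
    have hint : ∀ {k : (Fin (n + 1) → ℝ) → ℝ≥0∞}, Measurable k →
        ∫⁻ x, k x = ∫⁻ a, ∫⁻ v : Fin n → ℝ,
          k ((MeasurableEquiv.piFinSuccAbove (fun _ => ℝ) 0).symm (a, v)) := by
      intro k hk
      rw [← hmp.lintegral_comp hk, Measure.volume_eq_prod, lintegral_prod _ (hmeas hk).aemeasurable]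
    rw [hint hf, hint hg, hint hh]
    refine prekopaLeindler_real hr hs hrs (hmeas hf).lintegral_prod_right'
      (hmeas hg).lintegral_prod_right' (hmeas hh).lintegral_prod_right' fun a b => ?_
    refine ih ((hmeas hf).comp measurable_prodMk_left) ((hmeas hg).comp measurable_prodMk_left)
      ((hmeas hh).comp measurable_prodMk_left) fun v w => (hfgh _ _).trans_eq (congrArg h ?_)
    ext i
    refine Fin.cases ?_ (fun j => ?_) i <;> simp [MeasurableEquiv.piFinSuccAbove]

/-- Prékopa-Leindler inequality on Euclidean space. -/
theorem prekopaLeindler_euclideanSpace {r s : ℝ} (hr : 0 < r) (hs : 0 < s) (hrs : r + s = 1)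
    {n : ℕ} {f g h : EuclideanSpace ℝ (Fin n) → ℝ≥0∞} (hf : Measurable f) (hg : Measurable g)
    (hh : Measurable h) (hfgh : ∀ x y, f x ^ r * g y ^ s ≤ h (r • x + s • y)) :
    (∫⁻ x, f x) ^ r * (∫⁻ x, g x) ^ s ≤ ∫⁻ x, h x := by
  have hmp := PiLp.volume_preserving_toLp (Fin n)
  rw [← hmp.lintegral_comp hf, ← hmp.lintegral_comp hg, ← hmp.lintegral_comp hh]
  exact prekopaLeindler_pi hr hs hrs n (hf.comp hmp.measurable) (hg.comp hmp.measurable)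
    (hh.comp hmp.measurable) fun x y => hfgh _ _

/-- Prékopa-Leindler inequality on Euclidean space, for real-valued functions. -/
theorem prekopaLeindler_integral {r s : ℝ} (hr : 0 < r) (hs : 0 < s) (hrs : r + s = 1)
    {n : ℕ} {f g h : EuclideanSpace ℝ (Fin n) → ℝ} (hf : Measurable f) (hg : Measurable g)
    (hh : Measurable h) (hf0 : ∀ x, 0 ≤ f x) (hg0 : ∀ x, 0 ≤ g x) (hh0 : ∀ x, 0 ≤ h x)
    (hint : Integrable h) (hfgh : ∀ x y, f x ^ r * g y ^ s ≤ h (r • x + s • y)) :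
    (∫ x, f x) ^ r * (∫ x, g x) ^ s ≤ ∫ x, h x := by
  have key := prekopaLeindler_euclideanSpace hr hs hrs hf.ennreal_ofReal hg.ennreal_ofReal
    hh.ennreal_ofReal fun x y => by
      rw [ENNReal.ofReal_rpow_of_nonneg (hf0 x) hr.le, ENNReal.ofReal_rpow_of_nonneg (hg0 y) hs.le,
        ← ENNReal.ofReal_mul (rpow_nonneg (hf0 x) r)]
      exact ENNReal.ofReal_le_ofReal (hfgh x y)
  have hfin : ∫⁻ x, ENNReal.ofReal (h x) ≠ ⊤ :=
    ((hasFiniteIntegral_iff_ofReal (.of_forall hh0)).1 hint.2).ne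
  rw [integral_eq_lintegral_of_nonneg_ae (.of_forall hf0) hf.aestronglyMeasurable,
    integral_eq_lintegral_of_nonneg_ae (.of_forall hg0) hg.aestronglyMeasurable,
    integral_eq_lintegral_of_nonneg_ae (.of_forall hh0) hh.aestronglyMeasurable,
    ENNReal.toReal_rpow, ENNReal.toReal_rpow, ← ENNReal.toReal_mul]
  exact ENNReal.toReal_mono hfin key

theorem bddBelow_range_add_norm_sq_div {n : ℕ} {t : ℝ} (ht : 0 < t)
    {f : EuclideanSpace ℝ (Fin n) → ℝ} {C : ℝ} (hbd : ∀ x, |f x| ≤ C)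
    (x : EuclideanSpace ℝ (Fin n)) :
    BddBelow (Set.range fun y => f y + ‖x - y‖ ^ 2 / (2 * t)) := by
  refine ⟨-C, ?_⟩
  rintro _ ⟨y, rfl⟩
  have h1 := (abs_le.1 (hbd y)).1
  have h2 : 0 ≤ ‖x - y‖ ^ 2 / (2 * t) := by positivity
  dsimp only
  linarith

theorem hopfLax_le {n : ℕ} {t : ℝ} (ht : 0 < t)
    {f : EuclideanSpace ℝ (Fin n) → ℝ} {C : ℝ} (hbd : ∀ x, |f x| ≤ C)
    (x y : EuclideanSpace ℝ (Fin n)) :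
    hopfLax n t f x ≤ f y + ‖x - y‖ ^ 2 / (2 * t) :=
  ciInf_le (bddBelow_range_add_norm_sq_div ht hbd x) y

theorem measurable_hopfLax {n : ℕ} {t : ℝ} (ht : 0 < t)
    {f : EuclideanSpace ℝ (Fin n) → ℝ} {C : ℝ} (hbd : ∀ x, |f x| ≤ C) :
    Measurable (hopfLax n t f) := by
  refine UpperSemicontinuous.measurable ?_
  refine upperSemicontinuous_ciInf (bddBelow_range_add_norm_sq_div ht hbd) fun y => ?_
  exact Continuous.upperSemicontinuous (by fun_prop)

theorem integrable_exp_mul_mul_exp_neg_norm_sq {n : ℕ} {q u : ℝ} (hq : 0 < q) (hu : 0 < u)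
    {f : EuclideanSpace ℝ (Fin n) → ℝ} (hf : Measurable f) {C : ℝ} (hbd : ∀ x, |f x| ≤ C) :
    Integrable fun z => exp (q * f z) * exp (-‖z‖ ^ 2 / (4 * u)) := by
  have hgauss : Integrable fun z : EuclideanSpace ℝ (Fin n) => exp (-‖z‖ ^ 2 / (4 * u)) := by
    refine Integrable.of_integral_ne_zero ?_
    have h := GaussianFourier.integral_rexp_neg_mul_sq_norm (V := EuclideanSpace ℝ (Fin n))
      (b := 1 / (4 * u)) (by positivity)
    have hfun : ∀ z : EuclideanSpace ℝ (Fin n),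
        exp (-‖z‖ ^ 2 / (4 * u)) = exp (-(1 / (4 * u)) * ‖z‖ ^ 2) := fun z => by
      congr 1
      ring
    simp only [hfun, h]
    positivity
  refine hgauss.bdd_mul (c := exp (q * C)) (hf.const_mul q).exp.aestronglyMeasurable
    (.of_forall fun z => ?_)
  rw [norm_of_nonneg (exp_nonneg _), exp_le_exp]
  gcongr
  exact (abs_le.1 (hbd z)).2

/-- The quadratic identity that makes the Prékopa-Leindler hypothesis sharp. -/
theorem norm_sq_interpolation {E : Type*} [NormedAddCommGroup E] [InnerProductSpace ℝ E]
    {q₁ q₂ u₁ u₂ : ℝ} (hq₁ : q₁ ≠ 0) (hu₂ : u₂ ≠ 0) (hd : u₁ * q₁ - u₂ * q₂ ≠ 0)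
    (v w : E) :
    ‖(q₂ / q₁) • v + (1 - q₂ / q₁) • w‖ ^ 2 / (4 * u₂) +
        q₂ * (‖(u₁ / u₂) • v - ((q₂ / q₁) • v + (1 - q₂ / q₁) • w)‖ ^ 2 /
          (2 * (2 * (u₁ * q₁ - u₂ * q₂)))) =
      q₂ / q₁ * (‖(u₁ / u₂) • v‖ ^ 2 / (4 * u₁)) +
        (1 - q₂ / q₁) * (u₁ * ((q₁ - q₂) / (u₁ * q₁ - u₂ * q₂)) / (4 * u₂) * ‖w‖ ^ 2) := by
  have hcomb : ∀ a b : ℝ, ‖a • v + b • w‖ ^ 2 =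
      a ^ 2 * ‖v‖ ^ 2 + 2 * (a * b) * inner ℝ v w + b ^ 2 * ‖w‖ ^ 2 := by
    intro a b
    rw [norm_add_sq_real, norm_smul, norm_smul, real_inner_smul_left, real_inner_smul_right,
      mul_pow, mul_pow, norm_eq_abs, norm_eq_abs, sq_abs, sq_abs]
    ring
  have hsub : (u₁ / u₂) • v - ((q₂ / q₁) • v + (1 - q₂ / q₁) • w) =
      (u₁ / u₂ - q₂ / q₁) • v + (-(1 - q₂ / q₁)) • w := by
    module
  rw [hsub, hcomb, hcomb, norm_smul, mul_pow, norm_eq_abs, sq_abs]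
  obtain ⟨d, hd'⟩ : ∃ d, d = u₁ * q₁ - u₂ * q₂ := ⟨_, rfl⟩
  rw [← hd'] at hd ⊢
  field_simp
  rw [hd']
  ring

/-- The normalizing constants on both sides agree. -/
theorem hypercontractivity_constant {n : ℕ} {q₁ q₂ u₁ u₂ D : ℝ} (hu₁ : 0 < u₁) (hu₂ : 0 < u₂)
    (hD : 0 < D) :
    ((4 * π * u₁) ^ (-(n : ℝ) / 2)) ^ (1 / q₁) =
      ((4 * π * u₂) ^ (-(n : ℝ) / 2)) ^ (1 / q₂) *
        ((u₁ ^ (1 / q₂) / u₂ ^ (1 / q₁)) * D ^ (1 / q₂ - 1 / q₁)) ^ ((n : ℝ) / 2) *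
        ((((u₁ / u₂) ^ n)⁻¹) ^ (1 / q₁) *
          ((π / (u₁ * D / (4 * u₂))) ^ ((n : ℝ) / 2)) ^ (1 / q₂ - 1 / q₁)) := by
  have h4 : (4 : ℝ) * π = exp (log (4 * π)) := (exp_log (by positivity)).symm
  rw [show π / (u₁ * D / (4 * u₂)) = 4 * π * u₂ / (u₁ * D) by field_simp, ← rpow_natCast]
  generalize 1 / q₁ = a
  generalize 1 / q₂ = b
  rw [← exp_log hu₁, ← exp_log hu₂, ← exp_log hD, h4]
  simp only [← exp_add, ← exp_sub, ← exp_neg, ← exp_mul]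
  congr 1
  ring

theorem dimensional_local_hypercontractivity_hamilton_jacobi (n : ℕ) (hn : 1 ≤ n)
    (q₁ q₂ : ℝ) (hq₂ : 0 < q₂) (hq : q₂ < q₁)
    (u₁ u₂ : ℝ) (hu₁ : 0 < u₁) (hu₂ : 0 < u₂)
    (ht : 0 < 2 * (u₁ * q₁ - u₂ * q₂))
    (f : EuclideanSpace ℝ (Fin n) → ℝ) (L : NNReal) (hLip : LipschitzWith L f)
    (C : ℝ) (hbd : ∀ x, |f x| ≤ C)
    (x : EuclideanSpace ℝ (Fin n)) :
    (heat n u₁ (fun y => Real.exp (q₁ * hopfLax n (2 * (u₁ * q₁ - u₂ * q₂)) f y)) x) ^ (1 / q₁) ≤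
      (heat n u₂ (fun y => Real.exp (q₂ * f y)) x) ^ (1 / q₂) *
        ((u₁ ^ (1 / q₂) / u₂ ^ (1 / q₁)) *
          ((q₁ - q₂) / (u₁ * q₁ - u₂ * q₂)) ^ (1 / q₂ - 1 / q₁)) ^ ((n : ℝ) / 2) := by
  have hd : 0 < u₁ * q₁ - u₂ * q₂ := by linarith
  have hq₁ : 0 < q₁ := hq₂.trans hq
  have hr : 0 < q₂ / q₁ := by positivity
  have hs : 0 < 1 - q₂ / q₁ := by
    rw [sub_pos, div_lt_one hq₁]
    exact hq
  set H := hopfLax n (2 * (u₁ * q₁ - u₂ * q₂)) f with hH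
  set D := (q₁ - q₂) / (u₁ * q₁ - u₂ * q₂) with hDdef
  have hD : 0 < D := div_pos (by linarith) hd
  have hHmeas : Measurable H := measurable_hopfLax ht hbd
  have hfmeas : Measurable f := hLip.continuous.measurable
  have key := prekopaLeindler_integral hr hs (by ring) (n := n)
    (f := fun v => exp (q₁ * H (x + (u₁ / u₂) • v)) * exp (-‖(u₁ / u₂) • v‖ ^ 2 / (4 * u₁)))
    (g := fun w => exp (-(u₁ * D / (4 * u₂)) * ‖w‖ ^ 2))
    (h := fun z => exp (q₂ * f (x + z)) * exp (-‖z‖ ^ 2 / (4 * u₂)))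
    (by fun_prop) (by fun_prop) (by fun_prop) (fun _ => by positivity) (fun _ => by positivity)
    (fun _ => by positivity)
    (integrable_exp_mul_mul_exp_neg_norm_sq hq₂ hu₂ (f := fun z => f (x + z))
      (by fun_prop) fun z => hbd _)
    (fun v w => by
      have hHL := hopfLax_le ht hbd (x + (u₁ / u₂) • v)
        (x + ((q₂ / q₁) • v + (1 - q₂ / q₁) • w))
      rw [add_sub_add_left_eq_sub, ← hH] at hHL
      have hid := norm_sq_interpolation hq₁.ne' hu₂.ne' hd.ne' v w
      rw [← hDdef] at hid
      have hHL' := mul_le_mul_of_nonneg_left hHL hq₂.le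
      rw [← exp_add, ← exp_add, ← exp_mul, ← exp_mul, ← exp_add, exp_le_exp]
      have hcancel : q₁ * H (x + (u₁ / u₂) • v) * (q₂ / q₁) = q₂ * H (x + (u₁ / u₂) • v) := by
        field_simp
      rw [add_mul, hcancel, neg_div, neg_div, neg_mul, neg_mul, neg_mul, mul_comm _ (q₂ / q₁),
        mul_comm _ (1 - q₂ / q₁)]
      linarith)
  have hF : ∫ v, exp (q₁ * H (x + (u₁ / u₂) • v)) * exp (-‖(u₁ / u₂) • v‖ ^ 2 / (4 * u₁)) =
      ((u₁ / u₂) ^ n)⁻¹ * ∫ y, exp (q₁ * H y) * exp (-‖x - y‖ ^ 2 / (4 * u₁)) := by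
    rw [Measure.integral_comp_smul_of_nonneg volume
      (fun y => exp (q₁ * H (x + y)) * exp (-‖y‖ ^ 2 / (4 * u₁))) (u₁ / u₂)
      (hR := by positivity), finrank_euclideanSpace_fin, smul_eq_mul,
      ← integral_add_left_eq_self (fun y => exp (q₁ * H y) * exp (-‖x - y‖ ^ 2 / (4 * u₁))) x]
    simp
  have hG : ∫ z, exp (q₂ * f (x + z)) * exp (-‖z‖ ^ 2 / (4 * u₂)) =
      ∫ y, exp (q₂ * f y) * exp (-‖x - y‖ ^ 2 / (4 * u₂)) := by
    rw [← integral_add_left_eq_self (fun y => exp (q₂ * f y) * exp (-‖x - y‖ ^ 2 / (4 * u₂))) x]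
    simp
  rw [hF, hG, GaussianFourier.integral_rexp_neg_mul_sq_norm (by positivity),
    finrank_euclideanSpace_fin] at key
  have hIF : 0 ≤ ∫ y, exp (q₁ * H y) * exp (-‖x - y‖ ^ 2 / (4 * u₁)) :=
    integral_nonneg fun y => by positivity
  have hIG : 0 ≤ ∫ y, exp (q₂ * f y) * exp (-‖x - y‖ ^ 2 / (4 * u₂)) :=
    integral_nonneg fun y => by positivity
  simp only [heat, hu₁.ne', hu₂.ne', if_false]
  generalize ∫ y, exp (q₁ * H y) * exp (-‖x - y‖ ^ 2 / (4 * u₁)) = I at *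
  generalize ∫ y, exp (q₂ * f y) * exp (-‖x - y‖ ^ 2 / (4 * u₂)) = J at *
  have hroot := rpow_le_rpow (by positivity) key (by positivity : 0 ≤ 1 / q₂)
  rw [mul_rpow (by positivity) (by positivity), ← rpow_mul (by positivity),
    ← rpow_mul (by positivity),
    show q₂ / q₁ * (1 / q₂) = 1 / q₁ by field_simp,
    show (1 - q₂ / q₁) * (1 / q₂) = 1 / q₂ - 1 / q₁ by field_simp,
    mul_rpow (by positivity) hIF] at hroot
  rw [mul_rpow (by positivity) hIF, mul_rpow (by positivity) hIG,
    hypercontractivity_constant (q₂ := q₂) hu₁ hu₂ hD]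
  set K := ((u₁ ^ (1 / q₂) / u₂ ^ (1 / q₁)) * D ^ (1 / q₂ - 1 / q₁)) ^ ((n : ℝ) / 2)
  set B := ((4 * π * u₂) ^ (-(n : ℝ) / 2)) ^ (1 / q₂)
  have hBK : 0 ≤ B * K := by positivity
  linarith [mul_le_mul_of_nonneg_left hroot hBK]
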